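/- Let δ ≥ 2 be an integer and α ∈ U. Let C ≠ 0 be an abelian code in A_q(r_1,…,r_s) with defining set D_α(C), and let M = M(D_α(C)) be the q-orbits hypermatrix afforded by D_α(C). If there exist k ∈ {1,…,s} and a list j_0,…,j_{δ−2} of δ−1 consecutive integers modulo r_k such that H_M(k,j_i) = 0 for all i = 0,…,δ−2, then d*(C) ≥ d_α*(C) ≥ δ. -/

import Mathlib

open Classical

noncomputable section

namespace AbelianCodes

/-- The index set `I = Z_{r 0} × ⋯ × Z_{r (s-1)}`. -/
abbrev Idx {s : ℕ} (r : Fin s → ℕ) : Type := ∀ k, ZMod (r k)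

variable {F : Type*} [Field F]

/-- The support of a hypermatrix. -/
def hsupp {s : ℕ} {r : Fin s → ℕ} (M : Idx r → F) : Set (Idx r) := {i | M i ≠ 0}

/-- The hypercolumn `H_M(k,b)` of a hypermatrix, viewed as an `(s-1)`-dimensional
hypermatrix indexed by `∏_{j ≠ k} Z_{r j}`. -/
def hypercol {s : ℕ} {r : Fin (s+1) → ℕ} (M : Idx r → F) (k : Fin (s+1)) (b : ZMod (r k)) :
    Idx (fun j => r (k.succAbove j)) → F :=
  fun i => M (k.insertNth b i)

/-- `ω_M(k,b)`: the number of consecutive zero hypercolumns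
`H_M(k,b+1), H_M(k,b+2), …` (indices modulo `r k`). -/
def runLen {s : ℕ} {r : Fin (s+1) → ℕ} (M : Idx r → F) (k : Fin (s+1)) (b : ZMod (r k)) : ℕ :=
  ((Finset.Ico 1 (r k)).filter
    (fun j => ∀ m : ℕ, m ∈ Finset.Icc 1 j → hypercol M k (b + (m : ZMod (r k))) = 0)).card

/-- The apparent distance `d*(M)` of a hypermatrix, defined recursively on the
number of variables.  (A `0`-dimensional hypermatrix is a scalar, of apparent
distance `1` if nonzero and `0` otherwise; with this convention the `1`-dimensional
case becomes `max {ω_M(b)+1 : a_b ≠ 0}` and the higher-dimensional case becomes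
`max_k max {(ω_M(k,b)+1)·d*(H_M(k,b)) : H_M(k,b) ≠ 0}`, since zero hypermatrices
have apparent distance `0`.) -/
def apd : {s : ℕ} → (r : Fin s → ℕ) → (Idx r → F) → ℕ
  | 0, _, M => if M finZeroElim = 0 then 0 else 1
  | _+1, r, M =>
      Finset.univ.sup fun k =>
        Finset.univ.sup fun b : Fin (r k) =>
          (runLen M k ((b : ℕ) : ZMod (r k)) + 1) *
            apd (fun j => r (k.succAbove j)) (hypercol M k ((b : ℕ) : ZMod (r k)))

/-- The `q^t`-orbit `Q_t(a)` of `a ∈ I`. -/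
def qOrbit {s : ℕ} (r : Fin s → ℕ) (q t : ℕ) (a : Idx r) : Set (Idx r) :=
  {i | ∃ n : ℕ, ∀ k, i k = (q : ZMod (r k)) ^ (t * n) * a k}

/-- `D` is a union of `q^t`-orbits. -/
def OrbitUnion {s : ℕ} (r : Fin s → ℕ) (q t : ℕ) (D : Set (Idx r)) : Prop :=
  ∀ a ∈ D, qOrbit r q t a ⊆ D

/-- The hypermatrix afforded by `D ⊆ I`: entry `0` at indices in `D`, entry `1` elsewhere. -/
def afforded {s : ℕ} (r : Fin s → ℕ) (D : Set (Idx r)) : Idx r → F :=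
  fun i => if i ∈ D then 0 else 1

/-- `M` is a `q^t`-orbits hypermatrix, i.e. the hypermatrix afforded by some union
of `q^t`-orbits. -/
def IsOrbitMx {s : ℕ} (r : Fin s → ℕ) (q t : ℕ) (M : Idx r → F) : Prop :=
  ∃ D : Set (Idx r), OrbitUnion r q t D ∧ M = afforded r D

/-- The minimum apparent distance `mad(M) = min {d*(P) : P a q^t-orbits hypermatrix,
`0 ≠ P ≤ M`}`, where `P ≤ M` means `supp P ⊆ supp M`. -/
def mad {s : ℕ} (r : Fin s → ℕ) (q t : ℕ) (M : Idx r → F) : ℕ :=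
  sInf {d | ∃ P : Idx r → F, IsOrbitMx r q t P ∧ P ≠ 0 ∧ hsupp P ⊆ hsupp M ∧ apd r P = d}

/-- The `q^t`-cyclotomic coset of `b` modulo `r`. -/
def cycCoset (r q t : ℕ) (b : ZMod r) : Set (ZMod r) :=
  {x | ∃ n : ℕ, x = (q : ZMod r) ^ (t * n) * b}



variable {F : Type*} [Field F] {L : Type*} [Field L] [Algebra F L]

/-- An abelian code: a subspace of the group algebra `F[∏ Z_{r k}]` (identified
with the space of coefficient functions `I → F`) which is closed under all
translations, i.e. an ideal. -/
def IsAbelianCode {s : ℕ} {r : Fin s → ℕ} (C : Submodule F (Idx r → F)) : Prop :=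
  ∀ f ∈ C, ∀ a : Idx r, (fun i => f (i - a)) ∈ C

/-- Convolution: the multiplication of the group algebra in the coefficient
function picture. -/
def conv {s : ℕ} {r : Fin s → ℕ} [∀ k, NeZero (r k)] (f g : Idx r → F) : Idx r → F :=
  fun i => ∑ u : Idx r, f u * g (i - u)

/-- The (discrete) Fourier transform `φ_{α,f}(j) = f(α^j)` of a coefficient
function `f : I → F` with respect to `α`, with values in the extension `L`. -/
def fourier {s : ℕ} {r : Fin s → ℕ} [∀ k, NeZero (r k)] (α : Fin s → L) (f : Idx r → F) :
    Idx r → L :=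
  fun j => ∑ i : Idx r, algebraMap F L (f i) * ∏ k, α k ^ ((i k).val * (j k).val)

/-- The Hamming weight of a codeword. -/
def wt {s : ℕ} {r : Fin s → ℕ} [∀ k, NeZero (r k)] (f : Idx r → F) : ℕ :=
  (Finset.univ.filter fun i : Idx r => f i ≠ 0).card

/-- The minimum distance of a code. -/
def dmin {s : ℕ} {r : Fin s → ℕ} [∀ k, NeZero (r k)] (C : Submodule F (Idx r → F)) : ℕ :=
  sInf {w | ∃ f ∈ C, f ≠ (0 : Idx r → F) ∧ wt f = w}

/-- The defining set `D_α(C) = {a ∈ I : f(α^a) = 0 for all f ∈ C}`. -/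
def defSet {s : ℕ} (r : Fin s → ℕ) [∀ k, NeZero (r k)] (α : Fin s → L)
    (C : Submodule F (Idx r → F)) : Set (Idx r) :=
  {a | ∀ f ∈ C, fourier α f a = 0}

/-- The apparent distance of a code `C` with respect to `α`:
`d_α*(C) = min {d*(M(φ_{α,e})) : 0 ≠ e = e² ∈ C}`. -/
def dStarAlpha {s : ℕ} (r : Fin s → ℕ) [∀ k, NeZero (r k)] (α : Fin s → L)
    (C : Submodule F (Idx r → F)) : ℕ :=
  sInf {d | ∃ e, e ∈ C ∧ e ≠ (0 : Idx r → F) ∧ conv e e = e ∧ apd r (fourier α e) = d}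

/-- The apparent distance of a code: `d*(C) = max {d_β*(C) : β ∈ U}`, where `U`
is the set of tuples of primitive roots of unity in `L`. -/
def dStarCode {s : ℕ} (r : Fin s → ℕ) [∀ k, NeZero (r k)] (L : Type*) [Field L] [Algebra F L]
    (C : Submodule F (Idx r → F)) : ℕ :=
  sSup {d | ∃ α : Fin s → L, (∀ k, IsPrimitiveRoot (α k) (r k)) ∧ dStarAlpha r α C = d}

/-- The defining set of the multivariate BCH code `B_q(α,γ,δ,b)`:
`∪_{k∈γ} ∪_{l=0}^{δ_k−2} ∪_{i ∈ I(k, b_k+l)} Q(i)`. -/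
def bchDefSet {s : ℕ} (r : Fin s → ℕ) (q : ℕ) (γ : Finset (Fin s)) (δ b : Fin s → ℕ) :
    Set (Idx r) :=
  ⋃ k ∈ γ, ⋃ l ∈ Finset.range (δ k - 1),
    ⋃ i ∈ {i : Idx r | i k = ((b k + l : ℕ) : ZMod (r k))}, qOrbit r q 1 i


lemma le_apd {s : ℕ} (r : Fin (s+1) → ℕ) [∀ k, NeZero (r k)] (M : Idx r → F)
    (k : Fin (s+1)) (b : ZMod (r k)) :
    (runLen M k b + 1) * apd (fun j => r (k.succAbove j)) (hypercol M k b) ≤ apd r M := by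
  rw [apd]
  refine le_trans ?_ (Finset.le_sup (f := fun k => Finset.univ.sup fun b : Fin (r k) =>
          (runLen M k ((b : ℕ) : ZMod (r k)) + 1) *
            apd (fun j => r (k.succAbove j)) (hypercol M k ((b : ℕ) : ZMod (r k))))
      (Finset.mem_univ k))
  refine le_trans ?_ (Finset.le_sup (f := fun b : Fin (r k) =>
          (runLen M k ((b : ℕ) : ZMod (r k)) + 1) *
            apd (fun j => r (k.succAbove j)) (hypercol M k ((b : ℕ) : ZMod (r k))))
      (Finset.mem_univ ⟨b.val, ZMod.val_lt b⟩))
  simp only [ZMod.natCast_val, ZMod.cast_id', id_eq, le_refl]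

lemma hypercol_apply_removeNth {s : ℕ} {r : Fin (s+1) → ℕ} (M : Idx r → F)
    (k : Fin (s+1)) (i : Idx r) : hypercol M k (i k) (k.removeNth i) = M i := by
  unfold hypercol
  rw [Fin.insertNth_self_removeNth]

lemma apd_pos : ∀ {s : ℕ} (r : Fin s → ℕ) [∀ k, NeZero (r k)] (M : Idx r → F), M ≠ 0 →
    1 ≤ apd r M
  | 0, r, _, M, hM => by
    rw [apd, if_neg]
    intro h
    apply hM
    funext i
    rw [Subsingleton.elim i finZeroElim, h]; rfl
  | s+1, r, _, M, hM => by
    obtain ⟨i, hi⟩ := Function.ne_iff.1 hM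
    refine le_trans ?_ (le_apd r M 0 (i 0))
    have := apd_pos (fun j => r ((0 : Fin (s+1)).succAbove j)) (hypercol M 0 (i 0)) (by
      intro h
      apply hi
      rw [← hypercol_apply_removeNth M 0 i, h]; rfl)
    nlinarith

lemma le_runLen {s : ℕ} (r : Fin (s+1) → ℕ) (M : Idx r → F)
    (k : Fin (s+1)) (b : ZMod (r k)) (n : ℕ) (hn : n < r k)
    (h : ∀ m : ℕ, 1 ≤ m → m ≤ n → hypercol M k (b + (m : ZMod (r k))) = 0) :
    n ≤ runLen M k b := by
  have : Finset.Icc 1 n ⊆ ((Finset.Ico 1 (r k)).filter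
    (fun j => ∀ m : ℕ, m ∈ Finset.Icc 1 j → hypercol M k (b + (m : ZMod (r k))) = 0)) := by
    intro j hj
    simp only [Finset.mem_Icc, Finset.mem_filter, Finset.mem_Ico] at hj ⊢
    exact ⟨⟨hj.1, by omega⟩, fun m hm => h m hm.1 (by omega)⟩
  have h2 := Finset.card_le_card this
  rw [Nat.card_Icc, Nat.add_sub_cancel] at h2
  exact h2

lemma bound_apd {s : ℕ} (r : Fin (s+1) → ℕ) [∀ k, NeZero (r k)] (M : Idx r → F) (hM : M ≠ 0)
    (k : Fin (s+1)) (j₀ : ZMod (r k)) (n : ℕ)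
    (h : ∀ i : ℕ, i < n → hypercol M k (j₀ + (i : ZMod (r k))) = 0) :
    n + 1 ≤ apd r M := by
  obtain ⟨i, hi⟩ := Function.ne_iff.1 hM
  have hcol : hypercol M k (i k) ≠ 0 := by
    intro h
    apply hi
    rw [← hypercol_apply_removeNth M k i, h]; rfl
  have hex : ∃ t : ℕ, hypercol M k (j₀ - 1 - (t : ZMod (r k))) ≠ 0 := by
    refine ⟨(j₀ - 1 - i k).val, ?_⟩
    simpa using hcol
  have hn : n < r k := by
    by_contra hlt
    apply hcol
    have := h (i k - j₀).val (lt_of_lt_of_le (ZMod.val_lt _) (not_lt.1 hlt))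
    simpa using this
  have hb := Nat.find_spec hex
  have hmin := fun m hm => Nat.find_min hex (m := m) hm
  set t := Nat.find hex with ht
  have hrun : n ≤ runLen M k (j₀ - 1 - (t : ZMod (r k))) := by
    apply le_runLen _ _ _ _ _ hn
    intro m h1 h2
    by_cases hmt : m ≤ t
    · have := hmin (t - m) (by omega)
      rw [not_not] at this
      rw [Nat.cast_sub hmt] at this
      rw [← this]; congr 1; ring
    · have := h (m - t - 1) (by omega)
      rw [← this, Nat.sub_sub, Nat.cast_sub (by omega)]
      congr 1; push_cast; ring
  have h1 := le_apd r M k (j₀ - 1 - (t : ZMod (r k)))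
  have h2 := apd_pos _ _ hb
  nlinarith

/-- The character. -/
def chr {s : ℕ} {r : Fin s → ℕ} (α : Fin s → L) (i j : Idx r) : L :=
  ∏ k, α k ^ ((i k).val * (j k).val)

lemma chr_comm {s : ℕ} {r : Fin s → ℕ} (α : Fin s → L) (i j : Idx r) :
    chr α i j = chr α j i := by
  unfold chr
  exact Finset.prod_congr rfl fun k _ => by rw [mul_comm]

lemma chr_add {s : ℕ} {r : Fin s → ℕ} [∀ k, NeZero (r k)] (α : Fin s → L)
    (hα : ∀ k, IsPrimitiveRoot (α k) (r k)) (i j j' : Idx r) :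
    chr α i (j + j') = chr α i j * chr α i j' := by
  unfold chr
  rw [← Finset.prod_mul_distrib]
  refine Finset.prod_congr rfl fun k _ => ?_
  rw [Pi.add_apply, ZMod.val_add, mul_comm, pow_mul, mul_comm (i k).val, mul_comm (i k).val,
    pow_mul, pow_mul, ← mul_pow, ← pow_add]
  congr 1
  conv_rhs => rw [← Nat.mod_add_div ((j k).val + (j' k).val) (r k), pow_add, pow_mul,
    (hα k).pow_eq_one, one_pow, mul_one]

/-- The character as a monoid hom. -/
def chrHom {s : ℕ} {r : Fin s → ℕ} [∀ k, NeZero (r k)] (α : Fin s → L)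
    (hα : ∀ k, IsPrimitiveRoot (α k) (r k)) (i : Idx r) : Multiplicative (Idx r) →* L where
  toFun j := chr α i j.toAdd
  map_one' := by simp [chr]
  map_mul' j j' := chr_add α hα i _ _

lemma chrHom_inj {s : ℕ} {r : Fin s → ℕ} [∀ k, NeZero (r k)] (α : Fin s → L)
    (hα : ∀ k, IsPrimitiveRoot (α k) (r k)) : Function.Injective (chrHom (r := r) α hα) := by
  intro i i' h
  funext k
  by_cases hk : r k = 1
  · have : Subsingleton (ZMod (r k)) := by rw [hk]; infer_instance
    exact Subsingleton.elim _ _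
  have hr : 1 < r k := by have := NeZero.pos (r k); omega
  have : Fact (1 < r k) := ⟨hr⟩
  have hx : ∀ i : Idx r, chrHom α hα i (Multiplicative.ofAdd (Pi.single k 1)) =
      α k ^ (i k).val := by
    intro i
    change chr α i (Pi.single k 1) = _
    unfold chr
    rw [Finset.prod_eq_single k]
    · simp [ZMod.val_one]
    · intro b _ hb
      simp [Pi.single_eq_of_ne hb]
    · simp
  have h2 := hx i
  rw [h, hx i'] at h2
  exact (ZMod.val_injective _ ((hα k).pow_inj (ZMod.val_lt _) (ZMod.val_lt _) h2)).symm

lemma fourier_eq {s : ℕ} {r : Fin s → ℕ} [∀ k, NeZero (r k)] (α : Fin s → L)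
    (f : Idx r → F) (j : Idx r) :
    fourier α f j = ∑ i : Idx r, algebraMap F L (f i) * chr α i j := rfl

lemma fourier_zero_imp {s : ℕ} {r : Fin s → ℕ} [∀ k, NeZero (r k)] (α : Fin s → L)
    (hα : ∀ k, IsPrimitiveRoot (α k) (r k)) (f : Idx r → F) (h : fourier α f = 0) : f = 0 := by
  have hli := (linearIndependent_monoidHom (Multiplicative (Idx r)) L).comp _ (chrHom_inj α hα)
  rw [Fintype.linearIndependent_iff] at hli
  funext i
  have := hli (fun i => algebraMap F L (f i)) (by
    funext j
    have := congrFun h j.toAdd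
    rw [fourier_eq] at this
    rw [Finset.sum_apply]
    exact this) i
  simpa using this

lemma fourier_inj {s : ℕ} {r : Fin s → ℕ} [∀ k, NeZero (r k)] (α : Fin s → L)
    (hα : ∀ k, IsPrimitiveRoot (α k) (r k)) (f g : Idx r → F)
    (h : fourier α f = fourier α g) : f = g := by
  rw [← sub_eq_zero]
  apply fourier_zero_imp α hα
  funext j
  have := congrFun h j
  rw [fourier_eq, fourier_eq, ← sub_eq_zero, ← Finset.sum_sub_distrib] at this
  rw [fourier_eq, Pi.zero_apply, ← this]
  exact Finset.sum_congr rfl fun i _ => by rw [Pi.sub_apply, map_sub, sub_mul]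

lemma fourier_conv {s : ℕ} {r : Fin s → ℕ} [∀ k, NeZero (r k)] (α : Fin s → L)
    (hα : ∀ k, IsPrimitiveRoot (α k) (r k)) (f g : Idx r → F) (j : Idx r) :
    fourier α (conv f g) j = fourier α f j * fourier α g j := by
  simp only [fourier_eq, conv, map_sum, Finset.sum_mul, map_mul]
  rw [Finset.sum_comm]
  refine Finset.sum_congr rfl fun u _ => ?_
  rw [Finset.mul_sum]
  refine (Fintype.sum_equiv (Equiv.addRight u) _ _ fun v => ?_).symm
  simp only [Equiv.coe_addRight, add_sub_cancel_right]
  rw [chr_comm α (v + u) j, chr_add α hα, chr_comm α j v, chr_comm α j u]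
  ring

lemma conv_mem {s : ℕ} {r : Fin s → ℕ} [∀ k, NeZero (r k)] (C : Submodule F (Idx r → F))
    (hC : IsAbelianCode C) (f g : Idx r → F) (hg : g ∈ C) : conv f g ∈ C := by
  have : conv f g = ∑ u : Idx r, f u • (fun i => g (i - u)) := by
    funext i
    simp [conv, Finset.sum_apply]
  rw [this]
  exact C.sum_mem fun u _ => C.smul_mem _ (hC g hg u)

lemma exists_idem {s : ℕ} {r : Fin s → ℕ} [∀ k, NeZero (r k)] [Finite F] (α : Fin s → L)
    (hα : ∀ k, IsPrimitiveRoot (α k) (r k)) (C : Submodule F (Idx r → F))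
    (hC : IsAbelianCode C) (hC0 : C ≠ ⊥) :
    ∃ e, e ∈ C ∧ e ≠ (0 : Idx r → F) ∧ conv e e = e := by
  obtain ⟨f, hf, hf0⟩ := (Submodule.ne_bot_iff C).1 hC0
  let g : ℕ → (Idx r → F) := fun n => (conv f)^[n] f
  have hgC : ∀ n, g n ∈ C := by
    intro n
    induction n with
    | zero => exact hf
    | succ n ih =>
      change (conv f)^[n+1] f ∈ C
      rw [Function.iterate_succ_apply']
      exact conv_mem C hC _ _ ih
  have hgF : ∀ n j, fourier α (g n) j = fourier α f j ^ (n+1) := by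
    intro n j
    induction n with
    | zero => simp [g]
    | succ n ih =>
      change fourier α ((conv f)^[n+1] f) j = _
      rw [Function.iterate_succ_apply', fourier_conv α hα]
      change _ * fourier α (g n) j = _
      rw [ih]; ring
  obtain ⟨a, b, hab, hg⟩ := Finite.exists_ne_map_eq_of_infinite g
  wlog hlt : a < b generalizing a b
  · exact this b a hab.symm hg.symm (by omega)
  obtain ⟨m, rfl⟩ : ∃ m, b = a + (m + 1) := ⟨b - a - 1, by omega⟩
  have h01 : ∀ j, fourier α f j ≠ 0 → fourier α f j ^ (m+1) = 1 := by
    intro j hj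
    have h1 := hgF a j
    rw [hg, hgF] at h1
    have h2 : fourier α f j ^ (a+1) * fourier α f j ^ (m+1) = fourier α f j ^ (a+1) * 1 := by
      rw [mul_one, ← pow_add, ← h1]; congr 1; ring
    exact mul_left_cancel₀ (pow_ne_zero _ hj) h2
  refine ⟨g m, hgC m, ?_, ?_⟩
  · intro h0
    apply hf0
    apply fourier_zero_imp α hα
    funext j
    have := hgF m j
    rw [h0] at this
    have h3 : fourier α (0 : Idx r → F) j = 0 := by simp [fourier_eq]
    rw [h3] at this
    exact pow_eq_zero_iff (n := m+1) (by omega) |>.1 this.symm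
  · apply fourier_inj α hα
    funext j
    rw [fourier_conv α hα, hgF]
    by_cases hj : fourier α f j = 0
    · simp [hj]
    · rw [h01 j hj, one_mul]

/-- Let `δ ≥ 2`, `α ∈ U`, and let `C ≠ 0` be an abelian code
with defining set `D_α(C)` and `M = M(D_α(C))`.  If there are `k` and a list
`j_0,…,j_{δ−2}` of `δ−1` consecutive integers modulo `r_k` with `H_M(k,j_i) = 0`
for all `i`, then `d*(C) ≥ d_α*(C) ≥ δ`. -/
theorem bch_bound_one_direction
    {s : ℕ} (r : Fin (s+1) → ℕ) [∀ k, NeZero (r k)]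
    {F : Type*} [Field F] [Fintype F]
    (hcop : ∀ k, (Fintype.card F).Coprime (r k))
    (L : Type*) [Field L] [Algebra F L]
    (δ : ℕ) (hδ : 2 ≤ δ)
    (α : Fin (s+1) → L) (hα : ∀ k, IsPrimitiveRoot (α k) (r k))
    (C : Submodule F (Idx r → F)) (hC : IsAbelianCode C) (hC0 : C ≠ ⊥)
    (k : Fin (s+1)) (j₀ : ZMod (r k))
    (hzero : ∀ i : ℕ, i ≤ δ - 2 →
      hypercol (afforded r (defSet r α C) : Idx r → L) k (j₀ + (i : ZMod (r k))) = 0) :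
    δ ≤ dStarAlpha r α C ∧ dStarAlpha r α C ≤ dStarCode r L C := by
  constructor
  · apply le_csInf
    · obtain ⟨e, h1, h2, h3⟩ := exists_idem α hα C hC hC0
      exact ⟨_, e, h1, h2, h3, rfl⟩
    · rintro d ⟨e, he, he0, -, rfl⟩
      have hb := bound_apd r (fourier α e) (fun h => he0 (fourier_zero_imp α hα e h)) k j₀ (δ - 1) (by
        intro i hi
        have hz := hzero i (by omega)
        funext x
        have hx := congrFun hz x
        simp only [hypercol, afforded, Pi.zero_apply, ite_eq_left_iff, one_ne_zero, imp_false,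
          not_not] at hx
        exact hx e he)
      omega
  · apply le_csSup
    · apply Set.Finite.bddAbove
      have hfin : Set.Finite {β : Fin (s+1) → L | ∀ k, IsPrimitiveRoot (β k) (r k)} := by
        refine (Set.Finite.pi' (t := fun k => (primitiveRoots (r k) L : Set L))
          fun k => Finset.finite_toSet _).subset ?_
        intro β hβ k
        exact (mem_primitiveRoots (NeZero.pos (r k))).2 (hβ k)
      refine (hfin.image (fun β => dStarAlpha r β C)).subset ?_
      rintro d ⟨β, hβ, rfl⟩
      exact ⟨β, hβ, rfl⟩
    · exact ⟨α, hα, rfl⟩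

end AbelianCodes
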